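/- Let K satisfy Assumption A, let T' > 0, and let f be a mass-conserving weak solution of the coagulation equation on [0,T'] with kernel K and initial datum f_in, with 0 < v₀ := ∫ v f_in(dv) < ∞. Then for every real m ≥ 2 and every T ∈ (0,T'), sup_{t∈[0,T]} ∫ v^m f(dv,t) < ∞. -/

import Mathlib

open MeasureTheory Set Filter

noncomputable section

/-- Assumption A on the coagulation kernel `K(v,v') = h(v,v') g(v/(v+v'))`. -/
structure KernelAssumptionA (K : ℝ → ℝ → ℝ) (h : ℝ → ℝ → ℝ) (g : ℝ → ℝ)
    (γ H H₀ H₁ G₀ G₁ k : ℝ) : Prop where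
  K_nonneg : ∀ v v', 0 ≤ v → 0 ≤ v' → 0 ≤ K v v'
  K_eq : ∀ v v', 0 ≤ v → 0 ≤ v' → 0 < v + v' →
      K v v' = h v v' * g (v / (v + v'))
  h_cont : ContinuousOn (fun p : ℝ × ℝ => h p.1 p.2) (Ici 0 ×ˢ Ici 0)
  h_symm : ∀ v v', h v v' = h v' v
  γ_gt_one : 1 < γ
  H_gt_one : 1 < H
  H₀_pos : 0 < H₀
  h_lower : ∀ v v', 0 ≤ v → 0 ≤ v' → H < v + v' →
      H₀ * (v ^ γ + v' ^ γ) ≤ h v v'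
  h_posOn : ∀ R : ℝ, 0 < R → ∃ C : ℝ, 0 < C ∧
      ∀ v ∈ Icc (1 / R) R, ∀ v' ∈ Icc (1 / R) R, C ≤ h v v'
  H₁_pos : 0 < H₁
  h_upper : ∀ v v', 0 ≤ v → 0 ≤ v' → h v v' ≤ H₁ * (v ^ γ + v' ^ γ)
  g_cont : ContinuousOn g (Icc 0 1)
  g_symm : ∀ x ∈ Icc (0 : ℝ) 1, g x = g (1 - x)
  g_half : g (1 / 2) = 0
  G₀_pos : 0 < G₀
  G₁_pos : 0 < G₁
  k_ge_one : 1 ≤ k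
  g_lower : ∀ x ∈ Icc (0 : ℝ) 1, G₀ * |x - 1 / 2| ^ k ≤ g x
  g_upper : ∀ x ∈ Icc (0 : ℝ) 1, g x ≤ G₁

/-- Weak solution of the coagulation equation on `[0, T]` with kernel `K`
and initial datum `fin`, in the sense of measures on `(0,∞)`. -/
structure IsWeakSolution (K : ℝ → ℝ → ℝ) (γ T : ℝ)
    (f : ℝ → Measure ℝ) (fin : Measure ℝ) : Prop where
  conc : ∀ t ∈ Icc (0 : ℝ) T, f t (Iic 0) = 0
  time_cont : ∀ φ : ℝ → ℝ, Continuous φ → (∃ M : ℝ, ∀ v, |φ v| ≤ M) →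
      ContinuousOn (fun t => ∫ v, φ v ∂(f t)) (Icc (0 : ℝ) T)
  moment_bound : ∃ C : ℝ, ∀ t ∈ Icc (0 : ℝ) T,
      Integrable (fun v => 1 + v ^ γ) (f t) ∧ (∫ v, (1 + v ^ γ) ∂(f t)) ≤ C
  weak_form : ∀ φ : ℝ → ℝ, Continuous φ → HasCompactSupport φ →
      tsupport φ ⊆ Ioi 0 → ∀ t ∈ Icc (0 : ℝ) T,
      (∫ v, φ v ∂(f t)) - (∫ v, φ v ∂fin) =
        (1 / 2) * ∫ s in (0 : ℝ)..t,
          (∫ v, (∫ v', K v v' * (φ (v + v') - φ v - φ v') ∂(f s)) ∂(f s))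

/-- The solution conserves mass on `[0, T]`. -/
def IsMassConserving (T : ℝ) (f : ℝ → Measure ℝ) (fin : Measure ℝ) : Prop :=
  Integrable (fun v => v) fin ∧
    ∀ t ∈ Icc (0 : ℝ) T,
      Integrable (fun v => v) (f t) ∧ (∫ v, v ∂(f t)) = ∫ v, v ∂fin

/-- `μ` is a single Dirac measure `M • δ_V` with `M, V ∈ (0,∞)`. -/
def IsSingleDirac (μ : Measure ℝ) : Prop :=
  ∃ M V : ℝ, 0 < M ∧ 0 < V ∧ μ = ENNReal.ofReal M • Measure.dirac V

/-!
Write `v₀` for the conserved mass and consider the excess mass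
`E_R(t) = ∫_{v > R} (v - R) f(dv,t) = v₀ - ∫ min(v, R) f(dv,t)`. Mergers never decrease it, and a
particle `v ≤ R₀` that merges with some `v' > R` increases it by exactly `v`. Such a pair is far
from the diagonal, so it merges at a rate of at least `c v'^γ ≥ c R^(γ-1) (v' - R)`; and the
`γ`-moment bound keeps at least half of the mass in `(0, R₀]`, uniformly in time. Hence
`E_R' ≥ κ R^(γ-1) E_R` with `κ = c v₀ / 4`. Since `E_R ≤ v₀` at the final time `T'`, integrating
backwards yields `E_R(t) ≤ v₀ exp(-κ R^(γ-1) (T' - t))`: before `T'` the solution has a stretched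
exponential tail, which bounds all its moments.
-/

open scoped Topology BoundedContinuousFunction

/-! ### Measurable families of measures -/

lemma measurable_of_forall_measurable_integral {X Ω : Type*} [MeasurableSpace X]
    [TopologicalSpace Ω] [HasOuterApproxClosed Ω] [MeasurableSpace Ω] [BorelSpace Ω]
    {μ : X → Measure Ω} [∀ x, IsFiniteMeasure (μ x)]
    (h : ∀ φ : Ω →ᵇ ℝ, Measurable fun x => ∫ ω, φ ω ∂μ x) : Measurable μ := by
  have measurable_lintegral (φ : Ω →ᵇ NNReal) : Measurable fun x => ∫⁻ ω, φ ω ∂μ x := by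
    have lintegral_eq (x : X) : ∫⁻ ω, φ ω ∂μ x = ENNReal.ofReal (∫ ω, (φ ω : ℝ) ∂μ x) := by
      rw [← BoundedContinuousFunction.toReal_lintegral_coe_eq_integral,
        ENNReal.ofReal_toReal (BoundedContinuousFunction.lintegral_lt_top_of_nnreal _ φ).ne]
    simp only [lintegral_eq]
    exact (h (φ.comp _ NNReal.isometry_coe.lipschitz)).ennreal_ofReal
  have measurable_closed (F : Set Ω) (hF : IsClosed F) : Measurable fun x => μ x F :=
    measurable_of_tendsto_metrizable (fun n => measurable_lintegral (hF.apprSeq n))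
      (tendsto_pi_nhds.2 fun x => HasOuterApproxClosed.tendsto_lintegral_apprSeq hF (μ x))
  exact Measurable.measure_of_isPiSystem
    (BorelSpace.measurable_eq.trans borel_eq_generateFrom_isClosed) isPiSystem_isClosed
    measurable_closed (measurable_closed _ isClosed_univ)

lemma measurable_prod_self {X Ω : Type*} [MeasurableSpace X] [MeasurableSpace Ω]
    {μ : X → Measure Ω} [∀ x, IsFiniteMeasure (μ x)] (h : Measurable μ) :
    Measurable fun x => (μ x).prod (μ x) := by
  have h_apply {s : Set Ω} (hs : MeasurableSet s) : Measurable fun x => μ x s :=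
    (Measure.measurable_coe hs).comp h
  refine Measurable.measure_of_isPiSystem generateFrom_prod.symm isPiSystem_prod ?_ ?_
  · rintro _ ⟨s, hs, t, ht, rfl⟩
    simp only [Measure.prod_prod]
    exact (h_apply hs).mul (h_apply ht)
  · simp only [← univ_prod_univ, Measure.prod_prod]
    exact (h_apply .univ).mul (h_apply .univ)

lemma measurable_integral_of_measurable {X Ω : Type*} [MeasurableSpace X] [MeasurableSpace Ω]
    {μ : X → Measure Ω} (h : Measurable μ) {F : Ω → ℝ} (hF : Measurable F) :
    Measurable fun x => ∫ ω, F ω ∂μ x :=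
  (hF.stronglyMeasurable.integral_kernel (κ := ⟨μ, h⟩)).measurable

/-! ### A lower Grönwall inequality -/

lemma exp_mul_le_of_sub_eq_integral {E r : ℝ → ℝ} {κ a b : ℝ} (hab : a ≤ b) (hκ : 0 ≤ κ)
    (hr : IntervalIntegrable r volume a b)
    (hE : ∀ t ∈ Icc a b, ∀ t' ∈ Icc t b, E t' - E t = ∫ s in t..t', r s)
    (hE_nonneg : ∀ t ∈ Icc a b, 0 ≤ E t) (hr_lower : ∀ t ∈ Icc a b, κ * E t ≤ r t) :
    Real.exp (κ * (b - a)) * E a ≤ E b := by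
  have hr_sub {t t' : ℝ} (ht : t ∈ Icc a b) (ht' : t' ∈ Icc t b) :
      IntervalIntegrable r volume t t' :=
    hr.mono_set (by rw [uIcc_of_le hab, uIcc_of_le ht'.1]; exact Icc_subset_Icc ht.1 ht'.2)
  have monotone {t t' : ℝ} (ht : t ∈ Icc a b) (ht' : t' ∈ Icc t b) : E t ≤ E t' := by
    rw [← sub_nonneg, hE t ht t' ht']
    refine intervalIntegral.integral_nonneg ht'.1 fun s hs => ?_
    have hs' : s ∈ Icc a b := ⟨ht.1.trans hs.1, hs.2.trans ht'.2⟩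
    exact (mul_nonneg hκ (hE_nonneg s hs')).trans (hr_lower s hs')
  have increment {t t' : ℝ} (ht : t ∈ Icc a b) (ht' : t' ∈ Icc t b) :
      (t' - t) * (κ * E t) ≤ E t' - E t := by
    rw [hE t ht t' ht', ← smul_eq_mul, ← intervalIntegral.integral_const]
    refine intervalIntegral.integral_mono_on ht'.1 intervalIntegrable_const (hr_sub ht ht')
      fun s hs => ?_
    have hs' : s ∈ Icc a b := ⟨ht.1.trans hs.1, hs.2.trans ht'.2⟩
    exact (mul_le_mul_of_nonneg_left (monotone ht ⟨hs.1, hs'.2⟩) hκ).trans (hr_lower s hs')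
  have continuousOn : ContinuousOn (fun t => -E t) (Icc a b) := by
    have primitive := intervalIntegral.continuousOn_primitive_interval' hr left_mem_uIcc
    rw [uIcc_of_le hab] at primitive
    refine (primitive.const_add (E a)).neg.congr fun t ht => ?_
    simp only [Pi.neg_apply, ← hE a (left_mem_Icc.2 hab) t ht, add_sub_cancel]
  -- `E` need not be differentiable, hence the version of Grönwall's inequality for lower slopes.
  have gronwall := le_gronwallBound_of_liminf_deriv_right_le (f' := fun t => κ * -E t)
    (δ := -E a) (K := κ) (ε := 0) continuousOn ?_ le_rfl (fun t _ => (add_zero _).ge) b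
    (right_mem_Icc.2 hab)
  · rw [gronwallBound_ε0] at gronwall
    linarith
  · intro t ht ρ hρ
    refine Eventually.frequently ?_
    filter_upwards [Ioo_mem_nhdsGT ht.2] with z hz
    have := increment (Ico_subset_Icc_self ht) ⟨hz.1.le, hz.2.le⟩
    refine lt_of_le_of_lt ?_ hρ
    rw [inv_mul_le_iff₀ (sub_pos.2 hz.1)]
    linarith

/-! ### Coagulation rate and excess mass -/

/-- A measurable coagulation kernel of growth exponent `γ > 1` on the open quadrant: it is bounded
above by `B (v ^ γ + v' ^ γ)` everywhere, and below by `c v' ^ γ` where `v` is at most the fraction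
`θ` of a size `v' ≥ H`. No lower bound is asked near the diagonal, where the kernels of interest
vanish. -/
structure HasOffDiagonalGrowth (K : ℝ → ℝ → ℝ) (γ θ H c B : ℝ) : Prop where
  one_lt_exponent : 1 < γ
  ratio_pos : 0 < θ
  lower_const_pos : 0 < c
  measurable : Measurable ((Ioi 0 ×ˢ Ioi 0).indicator (Function.uncurry K))
  nonneg : ∀ v v', 0 < v → 0 < v' → 0 ≤ K v v'
  upper : ∀ v v', 0 < v → 0 < v' → K v v' ≤ B * (v ^ γ + v' ^ γ)
  lower : ∀ v v', 0 < v → 0 < v' → v ≤ θ * v' → H ≤ v' → c * v' ^ γ ≤ K v v'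

/-- Twice the rate of change of `∫ φ dμ` under coagulation with kernel `K`, when the size
distribution is `μ`. Integrating over the open quadrant only makes the values of `K` on its
boundary irrelevant. -/
def coagulationRate (K : ℝ → ℝ → ℝ) (φ : ℝ → ℝ) (μ : Measure ℝ) : ℝ :=
  ∫ p in Ioi 0 ×ˢ Ioi 0, K p.1 p.2 * (φ (p.1 + p.2) - φ p.1 - φ p.2) ∂μ.prod μ

lemma restrict_Ioi_of_measure_Iic_eq_zero {μ : Measure ℝ} {a : ℝ} (hμ : μ (Iic a) = 0) :
    μ.restrict (Ioi a) = μ :=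
  Measure.restrict_eq_self_of_ae_mem
    ((measure_eq_zero_iff_ae_notMem.1 hμ).mono fun _ => notMem_Iic.1)

lemma prod_restrict_quadrant {μ : Measure ℝ} [SFinite μ] (hμ : μ (Iic 0) = 0) :
    (μ.prod μ).restrict (Ioi 0 ×ˢ Ioi 0) = μ.prod μ := by
  rw [← Measure.prod_restrict, restrict_Ioi_of_measure_Iic_eq_zero hμ]

section FixedTime

variable {K : ℝ → ℝ → ℝ} {γ θ H c B M : ℝ} {φ : ℝ → ℝ} {μ : Measure ℝ}

namespace HasOffDiagonalGrowth

lemma upper_const_nonneg (hK : HasOffDiagonalGrowth K γ θ H c B) : 0 ≤ B := by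
  have h := (hK.nonneg 1 1 one_pos one_pos).trans (hK.upper 1 1 one_pos one_pos)
  rw [Real.one_rpow] at h
  linarith

lemma le_mul_one_add_rpow (hK : HasOffDiagonalGrowth K γ θ H c B) {v v' : ℝ}
    (hv : 0 < v) (hv' : 0 < v') : K v v' ≤ B * ((1 + v ^ γ) * (1 + v' ^ γ)) := by
  have hB := hK.upper_const_nonneg
  have : 0 ≤ v ^ γ * v' ^ γ := by positivity
  refine (hK.upper v v' hv hv').trans (mul_le_mul_of_nonneg_left ?_ hB)
  linarith

lemma norm_mul_increment_le (hK : HasOffDiagonalGrowth K γ θ H c B) (hφ : ∀ v > 0, |φ v| ≤ M)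
    {p : ℝ × ℝ} (hp : p ∈ Ioi (0 : ℝ) ×ˢ Ioi (0 : ℝ)) :
    ‖K p.1 p.2 * (φ (p.1 + p.2) - φ p.1 - φ p.2)‖ ≤
      3 * M * B * ((1 + p.1 ^ γ) * (1 + p.2 ^ γ)) := by
  obtain ⟨hp₁, hp₂⟩ : 0 < p.1 ∧ 0 < p.2 := hp
  have increment_le : |φ (p.1 + p.2) - φ p.1 - φ p.2| ≤ 3 * M := by
    have h := abs_le.1 (hφ _ (add_pos hp₁ hp₂))
    have h₁ := abs_le.1 (hφ _ hp₁)
    have h₂ := abs_le.1 (hφ _ hp₂)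
    exact abs_le.2 ⟨by linarith, by linarith⟩
  rw [norm_mul, Real.norm_of_nonneg (hK.nonneg _ _ hp₁ hp₂), Real.norm_eq_abs]
  calc K p.1 p.2 * |φ (p.1 + p.2) - φ p.1 - φ p.2|
      ≤ B * ((1 + p.1 ^ γ) * (1 + p.2 ^ γ)) * (3 * M) :=
        mul_le_mul (hK.le_mul_one_add_rpow hp₁ hp₂) increment_le (abs_nonneg _)
          ((hK.nonneg _ _ hp₁ hp₂).trans (hK.le_mul_one_add_rpow hp₁ hp₂))
    _ = 3 * M * B * ((1 + p.1 ^ γ) * (1 + p.2 ^ γ)) := by ring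

lemma aestronglyMeasurable_mul_increment [SFinite μ] (hK : HasOffDiagonalGrowth K γ θ H c B)
    (hφ : Measurable φ) :
    AEStronglyMeasurable (fun p : ℝ × ℝ => K p.1 p.2 * (φ (p.1 + p.2) - φ p.1 - φ p.2))
      ((μ.prod μ).restrict (Ioi 0 ×ˢ Ioi 0)) := by
  have aemeasurable_K : AEMeasurable (Function.uncurry K)
      ((μ.prod μ).restrict (Ioi 0 ×ˢ Ioi 0)) :=
    (aemeasurable_indicator_iff (measurableSet_Ioi.prod measurableSet_Ioi)).1
      hK.measurable.aemeasurable
  exact (aemeasurable_K.mul (by fun_prop : Measurable fun p : ℝ × ℝ =>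
    φ (p.1 + p.2) - φ p.1 - φ p.2).aemeasurable).aestronglyMeasurable

lemma integrableOn_mul_increment [SFinite μ] (hK : HasOffDiagonalGrowth K γ θ H c B)
    (hμ : Integrable (fun v => 1 + v ^ γ) μ) (hφ_meas : Measurable φ)
    (hφ : ∀ v > 0, |φ v| ≤ M) :
    IntegrableOn (fun p : ℝ × ℝ => K p.1 p.2 * (φ (p.1 + p.2) - φ p.1 - φ p.2))
      (Ioi 0 ×ˢ Ioi 0) (μ.prod μ) :=
  ((hμ.mul_prod hμ).const_mul (3 * M * B)).integrableOn.mono'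
    (hK.aestronglyMeasurable_mul_increment hφ_meas)
    (ae_restrict_of_forall_mem (measurableSet_Ioi.prod measurableSet_Ioi)
      fun _ => hK.norm_mul_increment_le hφ)

lemma abs_coagulationRate_le [SFinite μ] (hK : HasOffDiagonalGrowth K γ θ H c B)
    (hμ_pos : μ (Iic 0) = 0) (hμ : Integrable (fun v => 1 + v ^ γ) μ)
    (hφ : ∀ v > 0, |φ v| ≤ M) :
    |coagulationRate K φ μ| ≤ 3 * M * B * (∫ v, (1 + v ^ γ) ∂μ) ^ 2 := by
  calc |coagulationRate K φ μ|
      ≤ ∫ p in Ioi 0 ×ˢ Ioi 0, 3 * M * B * ((1 + p.1 ^ γ) * (1 + p.2 ^ γ)) ∂μ.prod μ :=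
        norm_integral_le_of_norm_le ((hμ.mul_prod hμ).const_mul (3 * M * B)).integrableOn
          (ae_restrict_of_forall_mem (measurableSet_Ioi.prod measurableSet_Ioi)
            fun _ => hK.norm_mul_increment_le hφ)
    _ = 3 * M * B * (∫ v, (1 + v ^ γ) ∂μ) ^ 2 := by
        rw [prod_restrict_quadrant hμ_pos, integral_const_mul,
          integral_prod_mul (fun v => 1 + v ^ γ) (fun v => 1 + v ^ γ), sq]

lemma tendsto_coagulationRate [SFinite μ] (hK : HasOffDiagonalGrowth K γ θ H c B)
    (hμ : Integrable (fun v => 1 + v ^ γ) μ) {φs : ℕ → ℝ → ℝ}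
    (hφs_meas : ∀ n, Measurable (φs n)) (hφs : ∀ n, ∀ v > 0, |φs n v| ≤ M)
    (hφ : ∀ v > 0, Tendsto (fun n => φs n v) atTop (𝓝 (φ v))) :
    Tendsto (fun n => coagulationRate K (φs n) μ) atTop (𝓝 (coagulationRate K φ μ)) :=
  tendsto_integral_of_dominated_convergence
    (fun p => 3 * M * B * ((1 + p.1 ^ γ) * (1 + p.2 ^ γ)))
    (fun n => hK.aestronglyMeasurable_mul_increment (hφs_meas n))
    ((hμ.mul_prod hμ).const_mul _).integrableOn
    (fun n => ae_restrict_of_forall_mem (measurableSet_Ioi.prod measurableSet_Ioi)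
      fun _ => hK.norm_mul_increment_le (hφs n))
    (ae_restrict_of_forall_mem (measurableSet_Ioi.prod measurableSet_Ioi) fun _ hp =>
      (((hφ _ (add_pos hp.1 hp.2)).sub (hφ _ hp.1)).sub (hφ _ hp.2)).const_mul _)

lemma integral_integral_eq_coagulationRate [SFinite μ] (hK : HasOffDiagonalGrowth K γ θ H c B)
    (hμ_pos : μ (Iic 0) = 0) (hμ : Integrable (fun v => 1 + v ^ γ) μ)
    (hφ_meas : Measurable φ) (hφ : ∀ v > 0, |φ v| ≤ M) :
    ∫ v, ∫ v', K v v' * (φ (v + v') - φ v - φ v') ∂μ ∂μ = coagulationRate K φ μ := by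
  have integrable := hK.integrableOn_mul_increment hμ hφ_meas hφ
  rw [IntegrableOn, prod_restrict_quadrant hμ_pos] at integrable
  rw [coagulationRate, prod_restrict_quadrant hμ_pos, integral_prod _ integrable]

end HasOffDiagonalGrowth

/-- The mass carried by particles above the size `R`, counting only the part of each particle in
excess of `R`. -/
def excessMass (μ : Measure ℝ) (R : ℝ) : ℝ := ∫ v in Ioi R, (v - R) ∂μ

lemma excessMass_nonneg (μ : Measure ℝ) (R : ℝ) : 0 ≤ excessMass μ R :=
  setIntegral_nonneg measurableSet_Ioi fun _ hv => sub_nonneg.2 (le_of_lt hv)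

lemma integrableOn_sub_const [IsFiniteMeasure μ] (hμ : Integrable (fun v => v) μ) (R : ℝ)
    (s : Set ℝ) : IntegrableOn (fun v => v - R) s μ :=
  (hμ.sub (integrable_const R)).integrableOn

lemma integral_min_eq_sub_excessMass [IsFiniteMeasure μ] (hμ : Integrable (fun v => v) μ) (R : ℝ) :
    ∫ v, min v R ∂μ = ∫ v, v ∂μ - excessMass μ R := by
  have min_eq (v : ℝ) : min v R = v - (Ioi R).indicator (fun v => v - R) v := by
    rcases le_or_gt v R with hv | hv
    · simp [hv]
    · simp [hv, hv.le]
  simp only [min_eq]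
  rw [integral_sub hμ ((integrableOn_sub_const hμ R _).integrable_indicator measurableSet_Ioi),
    integral_indicator measurableSet_Ioi, excessMass]

lemma excessMass_le_integral [IsFiniteMeasure μ] (hμ_pos : μ (Iic 0) = 0)
    (hμ : Integrable (fun v => v) μ) {R : ℝ} (hR : 0 ≤ R) : excessMass μ R ≤ ∫ v, v ∂μ := by
  have : 0 ≤ ∫ v, min v R ∂μ := by
    rw [← restrict_Ioi_of_measure_Iic_eq_zero hμ_pos]
    exact setIntegral_nonneg measurableSet_Ioi fun v hv => le_min (le_of_lt hv) hR
  rw [integral_min_eq_sub_excessMass hμ] at this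
  linarith

lemma mul_measureReal_Ici_le_excessMass [IsFiniteMeasure μ] (hμ : Integrable (fun v => v) μ)
    {R : ℝ} (hR : 0 < R) : R * μ.real (Ici (2 * R)) ≤ excessMass μ R := by
  calc R * μ.real (Ici (2 * R)) = ∫ _ in Ici (2 * R), R ∂μ := by
        rw [setIntegral_const, smul_eq_mul, mul_comm]
    _ ≤ ∫ v in Ici (2 * R), (v - R) ∂μ :=
        setIntegral_mono_on (integrable_const R).integrableOn (integrableOn_sub_const hμ R _)
          measurableSet_Ici fun v hv => by have : 2 * R ≤ v := hv; linarith
    _ ≤ excessMass μ R :=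
        setIntegral_mono_set (integrableOn_sub_const hμ R _)
          (ae_restrict_of_forall_mem measurableSet_Ioi fun v hv => sub_nonneg.2 (le_of_lt hv))
          (Ici_subset_Ioi.2 (by linarith)).eventuallyLE

lemma abs_min_le {v R : ℝ} (hv : 0 ≤ v) (hR : 0 ≤ R) : |min v R| ≤ R := by
  rw [abs_of_nonneg (le_min hv hR)]
  exact min_le_right v R

lemma min_add_sub_min_sub_min_nonpos {v v' R : ℝ} (hv : 0 ≤ v) (hv' : 0 ≤ v') (hR : 0 ≤ R) :
    min (v + v') R - min v R - min v' R ≤ 0 := by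
  grind

namespace HasOffDiagonalGrowth

lemma mul_sub_le_neg_mul_increment_min (hK : HasOffDiagonalGrowth K γ θ H c B) {v v' R : ℝ}
    (hv : 0 < v) (hvR : v ≤ R) (hvθ : v ≤ θ * R) (hv' : R < v') (hR : H ≤ R) :
    c * R ^ (γ - 1) * (v * (v' - R)) ≤
      -(K v v' * (min (v + v') R - min v R - min v' R)) := by
  have R_pos : 0 < R := hv.trans_le hvR
  have v'_pos : 0 < v' := R_pos.trans hv'
  have γ_sub_one_nonneg : 0 ≤ γ - 1 := (sub_pos.2 hK.one_lt_exponent).le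
  have c_nonneg := hK.lower_const_pos.le
  have increment : min (v + v') R - min v R - min v' R = -v := by
    rw [min_eq_right (by linarith), min_eq_left hvR, min_eq_right hv'.le]
    ring
  have rpow_split : v' ^ γ = v' ^ (γ - 1) * v' := by
    rw [← Real.rpow_add_one v'_pos.ne', sub_add_cancel]
  rw [increment, mul_neg, neg_neg]
  calc c * R ^ (γ - 1) * (v * (v' - R)) ≤ c * v' ^ (γ - 1) * (v * v') := by
        gcongr
        exact sub_le_self v' R_pos.le
    _ = c * v' ^ γ * v := by rw [rpow_split]; ring
    _ ≤ K v v' * v := by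
        gcongr
        exact hK.lower v v' hv v'_pos
          (hvθ.trans (mul_le_mul_of_nonneg_left hv'.le hK.ratio_pos.le)) (hR.trans hv'.le)

lemma mul_excessMass_le_neg_coagulationRate [IsFiniteMeasure μ]
    (hK : HasOffDiagonalGrowth K γ θ H c B) (hμ : Integrable (fun v => 1 + v ^ γ) μ)
    (hμ_id : Integrable (fun v => v) μ) {R R₀ : ℝ} (hR : 0 < R)
    (hRH : H ≤ R) (hR₀ : R₀ ≤ R) (hR₀θ : R₀ ≤ θ * R) :
    c * R ^ (γ - 1) * (∫ v in Ioc 0 R₀, v ∂μ) * excessMass μ R ≤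
      -coagulationRate K (fun v => min v R) μ := by
  have integrable := hK.integrableOn_mul_increment (M := R) hμ (φ := fun v => min v R)
    (by fun_prop) fun v hv => abs_min_le (le_of_lt hv) hR.le
  have rectangle_subset : Ioc 0 R₀ ×ˢ Ioi R ⊆ Ioi (0 : ℝ) ×ˢ Ioi (0 : ℝ) :=
    prod_mono Ioc_subset_Ioi_self (Ioi_subset_Ioi hR.le)
  calc c * R ^ (γ - 1) * (∫ v in Ioc 0 R₀, v ∂μ) * excessMass μ R
      = ∫ p in Ioc 0 R₀ ×ˢ Ioi R, c * R ^ (γ - 1) * (p.1 * (p.2 - R)) ∂μ.prod μ := by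
        rw [integral_const_mul, setIntegral_prod_mul (fun v => v) (fun v => v - R), excessMass,
          mul_assoc]
    _ ≤ ∫ p in Ioc 0 R₀ ×ˢ Ioi R,
          -(K p.1 p.2 * (min (p.1 + p.2) R - min p.1 R - min p.2 R)) ∂μ.prod μ :=
        setIntegral_mono_on
          ((hμ_id.mul_prod (hμ_id.sub (integrable_const R))).const_mul _).integrableOn
          (integrable.mono_set rectangle_subset).neg
          (measurableSet_Ioc.prod measurableSet_Ioi) fun _ hp =>
            hK.mul_sub_le_neg_mul_increment_min hp.1.1 (hp.1.2.trans hR₀) (hp.1.2.trans hR₀θ)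
              hp.2 hRH
    _ ≤ ∫ p in Ioi 0 ×ˢ Ioi 0,
          -(K p.1 p.2 * (min (p.1 + p.2) R - min p.1 R - min p.2 R)) ∂μ.prod μ :=
        setIntegral_mono_set integrable.neg
          (ae_restrict_of_forall_mem (measurableSet_Ioi.prod measurableSet_Ioi) fun p hp =>
            neg_nonneg.2 (mul_nonpos_of_nonneg_of_nonpos (hK.nonneg _ _ hp.1 hp.2)
              (min_add_sub_min_sub_min_nonpos (le_of_lt hp.1) (le_of_lt hp.2) hR.le)))
          rectangle_subset.eventuallyLE
    _ = -coagulationRate K (fun v => min v R) μ := integral_neg _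

end HasOffDiagonalGrowth

end FixedTime

section Moments

variable {γ : ℝ} {μ : Measure ℝ}

lemma isFiniteMeasure_of_integrable_one_add_rpow (hμ_pos : μ (Iic 0) = 0)
    (hμ : Integrable (fun v => 1 + v ^ γ) μ) : IsFiniteMeasure μ := by
  refine (integrable_const_iff_isFiniteMeasure (one_ne_zero (α := ℝ))).1
    (hμ.mono' aestronglyMeasurable_const ?_)
  filter_upwards [measure_eq_zero_iff_ae_notMem.1 hμ_pos] with v hv
  rw [norm_one]
  exact le_add_of_nonneg_right (Real.rpow_nonneg (le_of_lt (notMem_Iic.1 hv)) γ)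

lemma setIntegral_Ioi_id_le (hγ : 1 ≤ γ) (hμ_pos : μ (Iic 0) = 0)
    (hμ : Integrable (fun v => 1 + v ^ γ) μ) (hμ_id : Integrable (fun v => v) μ)
    {R : ℝ} (hR : 0 < R) : ∫ v in Ioi R, v ∂μ ≤ R ^ (1 - γ) * ∫ v, (1 + v ^ γ) ∂μ := by
  have le_weight {v : ℝ} (hv : R < v) : v ≤ R ^ (1 - γ) * (1 + v ^ γ) := by
    have v_pos : 0 < v := hR.trans hv
    calc v = v ^ (1 - γ) * v ^ γ := by rw [← Real.rpow_add v_pos, sub_add_cancel, Real.rpow_one]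
      _ ≤ R ^ (1 - γ) * (1 + v ^ γ) := by
          gcongr ?_ * ?_
          · exact Real.rpow_le_rpow_of_nonpos hR hv.le (by linarith)
          · linarith
  calc ∫ v in Ioi R, v ∂μ ≤ ∫ v in Ioi R, R ^ (1 - γ) * (1 + v ^ γ) ∂μ :=
        setIntegral_mono_on hμ_id.integrableOn (hμ.const_mul _).integrableOn measurableSet_Ioi
          fun _ => le_weight
    _ ≤ ∫ v in Ioi 0, R ^ (1 - γ) * (1 + v ^ γ) ∂μ :=
        setIntegral_mono_set (hμ.const_mul _).integrableOn
          (ae_restrict_of_forall_mem measurableSet_Ioi fun v hv => by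
            have : 0 < v := hv
            simp only [Pi.zero_apply]; positivity)
          (Ioi_subset_Ioi hR.le).eventuallyLE
    _ = R ^ (1 - γ) * ∫ v, (1 + v ^ γ) ∂μ := by
        rw [restrict_Ioi_of_measure_Iic_eq_zero hμ_pos, integral_const_mul]

lemma exists_forall_half_le_setIntegral_Ioc_id (hγ : 1 < γ) {v₀ : ℝ} (hv₀ : 0 < v₀) (C : ℝ) :
    ∃ R₀ : ℝ, ∀ μ : Measure ℝ, μ (Iic 0) = 0 → Integrable (fun v => 1 + v ^ γ) μ →
      ∫ v, (1 + v ^ γ) ∂μ ≤ C → Integrable (fun v => v) μ → ∫ v, v ∂μ = v₀ →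
        v₀ / 2 ≤ ∫ v in Ioc 0 R₀, v ∂μ := by
  have tail_tendsto : Tendsto (fun R : ℝ => R ^ (1 - γ) * C) atTop (𝓝 0) := by
    simpa using (tendsto_rpow_neg_atTop (sub_pos.2 hγ)).mul_const C
  obtain ⟨R₀, R₀_pos, tail_lt⟩ :=
    ((eventually_gt_atTop 0).and (tail_tendsto.eventually_lt_const (half_pos hv₀))).exists
  refine ⟨R₀, fun μ hμ_pos hμ hμ_le hμ_id hμ_mass => ?_⟩
  have tail_le : ∫ v in Ioi R₀, v ∂μ ≤ v₀ / 2 :=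
    (setIntegral_Ioi_id_le hγ.le hμ_pos hμ hμ_id R₀_pos).trans
      ((mul_le_mul_of_nonneg_left hμ_le (by positivity)).trans tail_lt.le)
  have split : ∫ v, v ∂μ = ∫ v in Ioc 0 R₀, v ∂μ + ∫ v in Ioi R₀, v ∂μ := by
    rw [← setIntegral_union (Ioc_disjoint_Ioi le_rfl) measurableSet_Ioi hμ_id.integrableOn
      hμ_id.integrableOn, Ioc_union_Ioi_eq_Ioi R₀_pos.le,
      restrict_Ioi_of_measure_Iic_eq_zero hμ_pos]
  linarith

end Moments

/-! ### Weak solutions -/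

lemma exists_seq_cutoff_Ioi :
    ∃ χ : ℕ → C(ℝ, ℝ), (∀ n, HasCompactSupport (χ n)) ∧ (∀ n, tsupport (χ n) ⊆ Ioi 0) ∧
      (∀ n v, χ n v ∈ Icc (0 : ℝ) 1) ∧ ∀ v > 0, ∀ᶠ n in atTop, χ n v = 1 := by
  have cutoff (n : ℕ) := exists_continuousMap_one_of_isCompact_subset_isOpen
    (isCompact_Icc (a := ((n : ℝ) + 1)⁻¹) (b := n + 1)) isOpen_Ioi
    (fun v hv => (inv_pos.2 n.cast_add_one_pos).trans_le hv.1 : _ ⊆ Ioi (0 : ℝ))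
  choose χ χ_one χ_compact χ_subset χ_mem using cutoff
  refine ⟨χ, χ_compact, χ_subset, χ_mem, fun v hv => ?_⟩
  have tendsto_succ : Tendsto (fun n : ℕ => (n : ℝ) + 1) atTop atTop :=
    tendsto_atTop_add_const_right _ _ tendsto_natCast_atTop_atTop
  filter_upwards [tendsto_succ.eventually_ge_atTop v,
    tendsto_succ.inv_tendsto_atTop.eventually_le_const hv] with n hvn hnv
  exact χ_one n ⟨hnv, hvn⟩

namespace IsWeakSolution

variable {K : ℝ → ℝ → ℝ} {γ θ H c B T M : ℝ} {f : ℝ → Measure ℝ} {fin : Measure ℝ}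
  {φ : ℝ → ℝ} {t t' : ℝ}

lemma integrable_one_add_rpow (hf : IsWeakSolution K γ T f fin) (ht : t ∈ Icc 0 T) :
    Integrable (fun v => 1 + v ^ γ) (f t) :=
  let ⟨_, h⟩ := hf.moment_bound
  (h t ht).1

lemma isFiniteMeasure (hf : IsWeakSolution K γ T f fin) (ht : t ∈ Icc 0 T) :
    IsFiniteMeasure (f t) :=
  isFiniteMeasure_of_integrable_one_add_rpow (hf.conc t ht) (hf.integrable_one_add_rpow ht)

lemma exists_forall_measureReal_univ_le (hf : IsWeakSolution K γ T f fin) :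
    ∃ N, ∀ t ∈ Icc 0 T, (f t).real univ ≤ N := by
  have continuousOn_mass := hf.time_cont (fun _ => 1) continuous_const ⟨1, fun _ => by simp⟩
  simp only [integral_const, smul_eq_mul, mul_one] at continuousOn_mass
  obtain ⟨N, hN⟩ := isCompact_Icc.exists_bound_of_continuousOn continuousOn_mass
  exact ⟨N, fun t ht => (le_abs_self _).trans (hN t ht)⟩

lemma measurable_domRestrict (hf : IsWeakSolution K γ T f fin) :
    Measurable fun t : Icc (0 : ℝ) T => f t := by
  have (t : Icc (0 : ℝ) T) : IsFiniteMeasure (f t) := hf.isFiniteMeasure t.2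
  refine measurable_of_forall_measurable_integral fun φ => Continuous.measurable ?_
  exact continuousOn_iff_continuous_domRestrict.1
    (hf.time_cont φ φ.continuous ⟨‖φ‖, φ.norm_coe_le_norm⟩)

lemma aemeasurable_coagulationRate (hK : HasOffDiagonalGrowth K γ θ H c B)
    (hf : IsWeakSolution K γ T f fin) (hφ : Measurable φ) :
    AEMeasurable (fun s => coagulationRate K φ (f s)) (volume.restrict (Icc 0 T)) := by
  have (t : Icc (0 : ℝ) T) : IsFiniteMeasure (f t) := hf.isFiniteMeasure t.2
  rw [aemeasurable_restrict_iff_comap_subtype measurableSet_Icc]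
  have rate_eq (μ : Measure ℝ) : coagulationRate K φ μ =
      ∫ p, (Ioi 0 ×ˢ Ioi 0).indicator (Function.uncurry K) p *
        (φ (p.1 + p.2) - φ p.1 - φ p.2) ∂μ.prod μ := by
    rw [coagulationRate, ← integral_indicator (measurableSet_Ioi.prod measurableSet_Ioi)]
    simp only [indicator_mul_left, Function.uncurry_def]
  simp only [Function.comp_def, rate_eq]
  exact (measurable_integral_of_measurable (measurable_prod_self hf.measurable_domRestrict)
    (hK.measurable.mul (by fun_prop))).aemeasurable

lemma exists_forall_abs_coagulationRate_le (hK : HasOffDiagonalGrowth K γ θ H c B)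
    (hf : IsWeakSolution K γ T f fin) (M : ℝ) :
    ∃ D, ∀ φ : ℝ → ℝ, (∀ v > 0, |φ v| ≤ M) → ∀ s ∈ Icc 0 T, |coagulationRate K φ (f s)| ≤ D := by
  obtain ⟨C, hC⟩ := hf.moment_bound
  refine ⟨3 * M * B * C ^ 2, fun φ hφ s hs => ?_⟩
  have := hf.isFiniteMeasure hs
  have hM : 0 ≤ M := (abs_nonneg _).trans (hφ 1 one_pos)
  have hB := hK.upper_const_nonneg
  have moment_nonneg : 0 ≤ ∫ v, (1 + v ^ γ) ∂f s := by
    rw [← restrict_Ioi_of_measure_Iic_eq_zero (hf.conc s hs)]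
    exact setIntegral_nonneg measurableSet_Ioi fun v hv =>
      add_nonneg zero_le_one (Real.rpow_nonneg (le_of_lt hv) γ)
  refine (hK.abs_coagulationRate_le (hf.conc s hs) (hC s hs).1 hφ).trans ?_
  gcongr
  exact (hC s hs).2

lemma intervalIntegrable_coagulationRate (hK : HasOffDiagonalGrowth K γ θ H c B)
    (hf : IsWeakSolution K γ T f fin) (hφ_meas : Measurable φ) (hφ : ∀ v > 0, |φ v| ≤ M)
    (ht : t ∈ Icc 0 T) (ht' : t' ∈ Icc 0 T) :
    IntervalIntegrable (fun s => coagulationRate K φ (f s)) volume t t' := by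
  obtain ⟨D, hD⟩ := hf.exists_forall_abs_coagulationRate_le hK M
  have integrableOn : IntegrableOn (fun s => coagulationRate K φ (f s)) (Icc 0 T) :=
    .of_bound measure_Icc_lt_top (hf.aemeasurable_coagulationRate hK hφ_meas).aestronglyMeasurable
      D (ae_restrict_of_forall_mem measurableSet_Icc (hD φ hφ))
  exact (integrableOn.mono_set (uIcc_subset_Icc ht ht')).intervalIntegrable

lemma integral_sub_integral_of_hasCompactSupport (hK : HasOffDiagonalGrowth K γ θ H c B)
    (hf : IsWeakSolution K γ T f fin) (hφ_cont : Continuous φ) (hφ_compact : HasCompactSupport φ)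
    (hφ_supp : tsupport φ ⊆ Ioi 0) (ht : t ∈ Icc 0 T) (ht' : t' ∈ Icc 0 T) :
    ∫ v, φ v ∂f t' - ∫ v, φ v ∂f t = 1 / 2 * ∫ s in t..t', coagulationRate K φ (f s) := by
  obtain ⟨M, hM⟩ := hφ_compact.exists_bound_of_continuous hφ_cont
  have hφ : ∀ v > 0, |φ v| ≤ M := fun v _ => hM v
  have zero_mem : (0 : ℝ) ∈ Icc 0 T := ⟨le_rfl, ht.1.trans ht.2⟩
  have from_zero {r : ℝ} (hr : r ∈ Icc 0 T) :
      ∫ v, φ v ∂f r - ∫ v, φ v ∂fin = 1 / 2 * ∫ s in 0..r, coagulationRate K φ (f s) := by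
    rw [hf.weak_form φ hφ_cont hφ_compact hφ_supp r hr]
    congr 1
    refine intervalIntegral.integral_congr fun s hs => ?_
    rw [uIcc_of_le hr.1] at hs
    have hs' : s ∈ Icc 0 T := ⟨hs.1, hs.2.trans hr.2⟩
    have := hf.isFiniteMeasure hs'
    exact hK.integral_integral_eq_coagulationRate (hf.conc s hs') (hf.integrable_one_add_rpow hs')
      hφ_cont.measurable hφ
  have integrable {r : ℝ} (hr : r ∈ Icc 0 T) :=
    hf.intervalIntegrable_coagulationRate hK hφ_cont.measurable hφ zero_mem hr
  rw [← intervalIntegral.integral_interval_sub_left (integrable ht') (integrable ht)]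
  linarith [from_zero ht, from_zero ht']

lemma tendsto_integral (hf : IsWeakSolution K γ T f fin) {φs : ℕ → ℝ → ℝ}
    (hφs_cont : ∀ n, Continuous (φs n)) (hφs : ∀ n, ∀ v > 0, |φs n v| ≤ M)
    (hφ : ∀ v > 0, Tendsto (fun n => φs n v) atTop (𝓝 (φ v))) (ht : t ∈ Icc 0 T) :
    Tendsto (fun n => ∫ v, φs n v ∂f t) atTop (𝓝 (∫ v, φ v ∂f t)) := by
  have := hf.isFiniteMeasure ht
  have ae_pos := (measure_eq_zero_iff_ae_notMem.1 (hf.conc t ht)).mono fun _ => notMem_Iic.1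
  exact tendsto_integral_of_dominated_convergence (fun _ => M)
    (fun n => (hφs_cont n).aestronglyMeasurable) (integrable_const M)
    (fun n => ae_pos.mono (hφs n)) (ae_pos.mono hφ)

lemma tendsto_intervalIntegral_coagulationRate (hK : HasOffDiagonalGrowth K γ θ H c B)
    (hf : IsWeakSolution K γ T f fin) {φs : ℕ → ℝ → ℝ}
    (hφs_meas : ∀ n, Measurable (φs n)) (hφs : ∀ n, ∀ v > 0, |φs n v| ≤ M)
    (hφ : ∀ v > 0, Tendsto (fun n => φs n v) atTop (𝓝 (φ v)))
    (ht : t ∈ Icc 0 T) (ht' : t' ∈ Icc 0 T) :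
    Tendsto (fun n => ∫ s in t..t', coagulationRate K (φs n) (f s)) atTop
      (𝓝 (∫ s in t..t', coagulationRate K φ (f s))) := by
  obtain ⟨D, hD⟩ := hf.exists_forall_abs_coagulationRate_le hK M
  have mem {s : ℝ} (hs : s ∈ uIoc t t') : s ∈ Icc 0 T :=
    uIcc_subset_Icc ht ht' (uIoc_subset_uIcc hs)
  refine intervalIntegral.tendsto_integral_filter_of_dominated_convergence (fun _ => D)
    (.of_forall fun n => (hf.intervalIntegrable_coagulationRate hK (hφs_meas n) (hφs n)
      ht ht').def'.aestronglyMeasurable)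
    (.of_forall fun n => ae_of_all _ fun s hs => hD _ (hφs n) s (mem hs))
    intervalIntegrable_const (ae_of_all _ fun s hs => ?_)
  have := hf.isFiniteMeasure (mem hs)
  exact hK.tendsto_coagulationRate (hf.integrable_one_add_rpow (mem hs)) hφs_meas hφs hφ

lemma integral_sub_integral (hK : HasOffDiagonalGrowth K γ θ H c B)
    (hf : IsWeakSolution K γ T f fin) (hφ_cont : Continuous φ) (hφ : ∀ v > 0, |φ v| ≤ M)
    (ht : t ∈ Icc 0 T) (ht' : t' ∈ Icc 0 T) :
    ∫ v, φ v ∂f t' - ∫ v, φ v ∂f t = 1 / 2 * ∫ s in t..t', coagulationRate K φ (f s) := by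
  obtain ⟨χ, χ_compact, χ_subset, χ_mem, χ_one⟩ := exists_seq_cutoff_Ioi
  have χφ_cont (n : ℕ) : Continuous fun v => χ n v * φ v := by fun_prop
  have χφ_le (n : ℕ) (v : ℝ) (hv : v > 0) : |χ n v * φ v| ≤ M := by
    rw [abs_mul, abs_of_nonneg (χ_mem n v).1]
    exact (mul_le_of_le_one_left (abs_nonneg _) (χ_mem n v).2).trans (hφ v hv)
  have χφ_tendsto (v : ℝ) (hv : v > 0) : Tendsto (fun n => χ n v * φ v) atTop (𝓝 (φ v)) :=
    tendsto_nhds_of_eventually_eq ((χ_one v hv).mono fun n hn => by rw [hn, one_mul])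
  have weak_form_χφ (n : ℕ) := hf.integral_sub_integral_of_hasCompactSupport hK (χφ_cont n)
    (χ_compact n).mul_right (tsupport_mul_subset_left.trans (χ_subset n)) ht ht'
  refine tendsto_nhds_unique
    ((hf.tendsto_integral χφ_cont χφ_le χφ_tendsto ht').sub
      (hf.tendsto_integral χφ_cont χφ_le χφ_tendsto ht)) ?_
  simp only [weak_form_χφ]
  exact (hf.tendsto_intervalIntegral_coagulationRate hK (fun n => (χφ_cont n).measurable) χφ_le
    χφ_tendsto ht ht').const_mul (1 / 2)

lemma excessMass_sub_excessMass (hK : HasOffDiagonalGrowth K γ θ H c B)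
    (hf : IsWeakSolution K γ T f fin) (hmc : IsMassConserving T f fin) {R : ℝ} (hR : 0 ≤ R)
    (ht : t ∈ Icc 0 T) (ht' : t' ∈ Icc 0 T) :
    excessMass (f t') R - excessMass (f t) R =
      ∫ s in t..t', -(1 / 2) * coagulationRate K (fun v => min v R) (f s) := by
  have := hf.isFiniteMeasure ht
  have := hf.isFiniteMeasure ht'
  have weak_form := hf.integral_sub_integral hK (φ := fun v => min v R) (M := R) (by fun_prop)
    (fun v hv => abs_min_le (le_of_lt hv) hR) ht ht'
  rw [integral_min_eq_sub_excessMass (hmc.2 t ht).1,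
    integral_min_eq_sub_excessMass (hmc.2 t' ht').1, (hmc.2 t ht).2, (hmc.2 t' ht').2] at weak_form
  rw [intervalIntegral.integral_const_mul]
  linarith

lemma exp_mul_excessMass_le (hK : HasOffDiagonalGrowth K γ θ H c B)
    (hf : IsWeakSolution K γ T f fin) (hmc : IsMassConserving T f fin) {R R₀ m₀ : ℝ}
    (hR : 0 < R) (hRH : H ≤ R) (hR₀ : R₀ ≤ R) (hR₀θ : R₀ ≤ θ * R) (hm₀ : 0 ≤ m₀)
    (hm₀_le : ∀ s ∈ Icc 0 T, m₀ ≤ ∫ v in Ioc 0 R₀, v ∂f s) (ht : t ∈ Icc 0 T) :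
    Real.exp (c * m₀ / 2 * R ^ (γ - 1) * (T - t)) * excessMass (f t) R ≤ ∫ v, v ∂fin := by
  have c_nonneg := hK.lower_const_pos.le
  have T_mem : T ∈ Icc 0 T := ⟨ht.1.trans ht.2, le_rfl⟩
  have mem {s : ℝ} (hs : s ∈ Icc t T) : s ∈ Icc 0 T := ⟨ht.1.trans hs.1, hs.2⟩
  have rate_lower : ∀ s ∈ Icc t T, c * m₀ / 2 * R ^ (γ - 1) * excessMass (f s) R ≤
      -(1 / 2) * coagulationRate K (fun v => min v R) (f s) := fun s hs => by
    have := hf.isFiniteMeasure (mem hs)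
    have rate := hK.mul_excessMass_le_neg_coagulationRate (hf.integrable_one_add_rpow (mem hs))
      (hmc.2 s (mem hs)).1 hR hRH hR₀ hR₀θ
    have small_mass : c * R ^ (γ - 1) * m₀ * excessMass (f s) R ≤
        c * R ^ (γ - 1) * (∫ v in Ioc 0 R₀, v ∂f s) * excessMass (f s) R := by
      gcongr
      · exact excessMass_nonneg _ _
      · exact hm₀_le s (mem hs)
    linarith
  have := hf.isFiniteMeasure T_mem
  refine (exp_mul_le_of_sub_eq_integral (E := fun s => excessMass (f s) R) ht.2 (by positivity)
    ((hf.intervalIntegrable_coagulationRate hK (M := R) (by fun_prop)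
      (fun v hv => abs_min_le (le_of_lt hv) hR.le) ht T_mem).const_mul (-(1 / 2)))
    (fun s hs s' hs' => hf.excessMass_sub_excessMass hK hmc hR.le (mem hs)
      (mem ⟨hs.1.trans hs'.1, hs'.2⟩))
    (fun s _ => excessMass_nonneg _ _) rate_lower).trans ?_
  rw [← (hmc.2 T T_mem).2]
  exact excessMass_le_integral (hf.conc T T_mem) (hmc.2 T T_mem).1 hR.le

lemma exists_excessMass_le_mul_exp (hK : HasOffDiagonalGrowth K γ θ H c B)
    (hf : IsWeakSolution K γ T f fin) (hmc : IsMassConserving T f fin) (hv₀ : 0 < ∫ v, v ∂fin) :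
    ∃ κ > 0, ∃ R₁ > 0, ∀ R ≥ R₁, ∀ t ∈ Icc 0 T,
      excessMass (f t) R ≤ (∫ v, v ∂fin) * Real.exp (-(κ * (T - t) * R ^ (γ - 1))) := by
  obtain ⟨C, hC⟩ := hf.moment_bound
  obtain ⟨R₀, small_mass⟩ := exists_forall_half_le_setIntegral_Ioc_id hK.one_lt_exponent hv₀ C
  set v₀ := ∫ v, v ∂fin
  have c_pos := hK.lower_const_pos
  refine ⟨c * (v₀ / 2) / 2, by positivity, max 1 (max H (max R₀ (R₀ / θ))), by positivity,
    fun R hR t ht => ?_⟩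
  simp only [ge_iff_le, max_le_iff] at hR
  obtain ⟨one_le, H_le, R₀_le, R₀_div_le⟩ := hR
  have decay := hf.exp_mul_excessMass_le hK hmc (one_pos.trans_le one_le) H_le R₀_le
    ((div_le_iff₀' hK.ratio_pos).1 R₀_div_le) (half_pos hv₀).le
    (fun s hs => small_mass _ (hf.conc s hs) (hC s hs).1 (hC s hs).2 (hmc.2 s hs).1
      (hmc.2 s hs).2) ht
  rw [Real.exp_neg, ← div_eq_mul_inv, le_div_iff₀' (Real.exp_pos _)]
  exact (congrArg (Real.exp · * _) (by ring)).trans_le decay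

lemma exists_measureReal_Ici_le_mul_exp (hK : HasOffDiagonalGrowth K γ θ H c B)
    (hf : IsWeakSolution K γ T f fin) (hmc : IsMassConserving T f fin) (hv₀ : 0 < ∫ v, v ∂fin)
    {T₁ : ℝ} (hT₁ : T₁ < T) :
    ∃ β > 0, ∃ A ≥ 0, ∃ X ≥ 0, ∀ t ∈ Icc 0 T₁, ∀ x ≥ X,
      (f t).real (Ici x) ≤ A * Real.exp (-(β * x ^ (γ - 1))) := by
  obtain ⟨κ, κ_pos, R₁, R₁_pos, excess_le⟩ := hf.exists_excessMass_le_mul_exp hK hmc hv₀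
  have gap_pos := sub_pos.2 hT₁
  set v₀ := ∫ v, v ∂fin
  refine ⟨κ * (T - T₁) / 2 ^ (γ - 1), by positivity, v₀ / R₁, by positivity, 2 * R₁,
    by positivity, fun t ht x hx => ?_⟩
  have ht' : t ∈ Icc 0 T := ⟨ht.1, ht.2.trans hT₁.le⟩
  have := hf.isFiniteMeasure ht'
  obtain ⟨R, rfl⟩ : ∃ R, x = 2 * R := ⟨x / 2, by ring⟩
  have R₁_le : R₁ ≤ R := by linarith
  have R_pos : 0 < R := R₁_pos.trans_le R₁_le
  have exponent_eq : κ * (T - T₁) / 2 ^ (γ - 1) * (2 * R) ^ (γ - 1) =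
      κ * (T - T₁) * R ^ (γ - 1) := by
    rw [Real.mul_rpow two_pos.le R_pos.le]
    field_simp
  calc (f t).real (Ici (2 * R)) ≤ excessMass (f t) R / R :=
        (le_div_iff₀' R_pos).2 (mul_measureReal_Ici_le_excessMass (hmc.2 t ht').1 R_pos)
    _ ≤ v₀ * Real.exp (-(κ * (T - t) * R ^ (γ - 1))) / R := by
        gcongr; exact excess_le R R₁_le t ht'
    _ ≤ v₀ * Real.exp (-(κ * (T - T₁) * R ^ (γ - 1))) / R₁ := by
        gcongr; exact ht.2
    _ = v₀ / R₁ * Real.exp (-(κ * (T - T₁) / 2 ^ (γ - 1) * (2 * R) ^ (γ - 1))) := by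
        rw [exponent_eq]; ring

end IsWeakSolution

/-! ### Stretched exponential moments -/

section ExponentialMoments

variable {μ : Measure ℝ} {α β : ℝ}

lemma lintegral_ofReal_le_of_measureReal_le_rpow {Ω : Type*} [MeasurableSpace Ω] {μ : Measure Ω}
    [IsFiniteMeasure μ] {g : Ω → ℝ} (hg_nonneg : 0 ≤ᵐ[μ] g) (hg : AEMeasurable g μ)
    {a A q : ℝ} (ha : 0 < a) (hA : 0 ≤ A) (hq : q < -1)
    (h : ∀ y > a, μ.real {ω | y ≤ g ω} ≤ A * y ^ q) :
    ∫⁻ ω, ENNReal.ofReal (g ω) ∂μ ≤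
      ENNReal.ofReal (a * μ.real univ + A * (-a ^ (q + 1) / (q + 1))) := by
  have body : ∫⁻ y in Ioc 0 a, μ {ω | y ≤ g ω} ≤ ENNReal.ofReal (a * μ.real univ) := by
    calc ∫⁻ y in Ioc 0 a, μ {ω | y ≤ g ω} ≤ ∫⁻ _ in Ioc 0 a, μ univ :=
          lintegral_mono fun _ => measure_mono (subset_univ _)
      _ = ENNReal.ofReal (a * μ.real univ) := by
          rw [setLIntegral_const, Real.volume_Ioc, sub_zero, ENNReal.ofReal_mul ha.le,
            ofReal_measureReal, mul_comm]
  have tail : ∫⁻ y in Ioi a, μ {ω | y ≤ g ω} ≤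
      ENNReal.ofReal (A * (-a ^ (q + 1) / (q + 1))) := by
    calc ∫⁻ y in Ioi a, μ {ω | y ≤ g ω} ≤ ∫⁻ y in Ioi a, ENNReal.ofReal (A * y ^ q) :=
          setLIntegral_mono' measurableSet_Ioi fun y hy => by
            rw [← ofReal_measureReal]
            exact ENNReal.ofReal_le_ofReal (h y hy)
      _ = ENNReal.ofReal (A * (-a ^ (q + 1) / (q + 1))) := by
          rw [← ofReal_integral_eq_lintegral_ofReal
            ((integrableOn_Ioi_rpow_of_lt hq ha).const_mul A)
            (ae_restrict_of_forall_mem measurableSet_Ioi fun y hy =>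
              mul_nonneg hA (Real.rpow_nonneg (ha.trans hy).le q)),
            integral_const_mul, integral_Ioi_rpow_of_lt hq ha]
  have tail_nonneg : 0 ≤ A * (-a ^ (q + 1) / (q + 1)) :=
    mul_nonneg hA (div_nonneg_of_nonpos (neg_nonpos.2 (Real.rpow_nonneg ha.le _)) (by linarith))
  rw [lintegral_eq_lintegral_meas_le μ hg_nonneg hg, ← Ioc_union_Ioi_eq_Ioi ha.le,
    lintegral_union measurableSet_Ioi (Ioc_disjoint_Ioi le_rfl),
    ENNReal.ofReal_add (by positivity) tail_nonneg]
  exact add_le_add body tail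

lemma le_exp_mul_rpow_iff {y v : ℝ} (hα : 0 < α) (hβ : 0 < β) (hy : 1 ≤ y) (hv : 0 ≤ v) :
    y ≤ Real.exp (β * v ^ α) ↔ (Real.log y / β) ^ α⁻¹ ≤ v := by
  rw [Real.rpow_inv_le_iff_of_pos (div_nonneg (Real.log_nonneg hy) hβ.le) hv hα,
    div_le_iff₀' hβ, Real.log_le_iff_le_exp (one_pos.trans_le hy)]

lemma lintegral_exp_mul_rpow_le_of_measureReal_Ici_le [IsFiniteMeasure μ] {A X : ℝ} (hα : 0 < α)
    (hβ : 0 < β) (hA : 0 ≤ A) (hX : 0 ≤ X)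
    (h : ∀ x ≥ X, μ.real (Ici x) ≤ A * Real.exp (-(2 * β * x ^ α))) :
    ∫⁻ v in Ioi 0, ENNReal.ofReal (Real.exp (β * v ^ α)) ∂μ ≤
      ENNReal.ofReal (Real.exp (β * X ^ α) * μ.real univ + A) := by
  have one_le : 1 ≤ Real.exp (β * X ^ α) := Real.one_le_exp (by positivity)
  have level_le (y : ℝ) (hy : y > Real.exp (β * X ^ α)) :
      (μ.restrict (Ioi 0)).real {v | y ≤ Real.exp (β * v ^ α)} ≤ A * y ^ (-2 : ℝ) := by
    have one_le_y : 1 ≤ y := one_le.trans (le_of_lt hy)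
    set x := (Real.log y / β) ^ α⁻¹
    have X_le : X ≤ x :=
      (not_le.1 (mt (le_exp_mul_rpow_iff hα hβ one_le_y hX).2 (not_le.2 hy))).le
    have x_rpow : x ^ α = Real.log y / β :=
      Real.rpow_inv_rpow (div_nonneg (Real.log_nonneg one_le_y) hβ.le) hα.ne'
    calc (μ.restrict (Ioi 0)).real {v | y ≤ Real.exp (β * v ^ α)} ≤ μ.real (Ici x) := by
          rw [measureReal_restrict_apply' measurableSet_Ioi]
          exact measureReal_mono fun v hv =>
            (le_exp_mul_rpow_iff hα hβ one_le_y (le_of_lt hv.2)).1 hv.1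
      _ ≤ A * Real.exp (-(2 * β * x ^ α)) := h x X_le
      _ = A * y ^ (-2 : ℝ) := by
          rw [x_rpow, Real.rpow_def_of_pos (one_pos.trans_le one_le_y)]
          congr 2
          field_simp
  refine (lintegral_ofReal_le_of_measureReal_le_rpow (ae_of_all _ fun _ => (Real.exp_pos _).le)
    (by fun_prop) (Real.exp_pos _) hA (by norm_num) level_le).trans (ENNReal.ofReal_le_ofReal ?_)
  have tail_factor_le : -Real.exp (β * X ^ α) ^ (-2 + 1 : ℝ) / (-2 + 1) ≤ 1 := by
    rw [show (-2 + 1 : ℝ) = -1 by norm_num, Real.rpow_neg_one, neg_div_neg_eq, div_one]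
    exact inv_le_one_of_one_le₀ one_le
  gcongr ?_ * ?_ + ?_
  · exact ENNReal.toReal_mono (measure_ne_top μ univ) (Measure.restrict_le_self univ)
  · exact mul_le_of_le_one_right hA tail_factor_le

lemma rpow_le_mul_exp_mul_rpow {m v : ℝ} (hα : 0 < α) (hβ : 0 < β) (hm : 0 < m) (hv : 0 ≤ v) :
    v ^ m ≤ (m / (α * β)) ^ (m / α) * Real.exp (β * v ^ α) := by
  set s := m / α with hs
  have s_pos : 0 < s := div_pos hm hα
  have base_eq : s / β * (β * v ^ α / s) = v ^ α := by field_simp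
  calc v ^ m = (s / β * (β * v ^ α / s)) ^ s := by
        rw [base_eq, ← Real.rpow_mul hv, hs, mul_div_cancel₀ _ hα.ne']
    _ ≤ (s / β * Real.exp (β * v ^ α / s)) ^ s := by
        gcongr
        linarith [Real.add_one_le_exp (β * v ^ α / s)]
    _ = (m / (α * β)) ^ s * Real.exp (β * v ^ α) := by
        rw [Real.mul_rpow (by positivity) (Real.exp_pos _).le, ← Real.exp_mul,
          div_mul_cancel₀ _ s_pos.ne', hs, div_div]

lemma setLIntegral_Ioi_rpow_le {m C : ℝ} (hα : 0 < α) (hβ : 0 < β) (hm : 0 < m)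
    (h : ∫⁻ v in Ioi 0, ENNReal.ofReal (Real.exp (β * v ^ α)) ∂μ ≤ ENNReal.ofReal C) :
    ∫⁻ v in Ioi 0, ENNReal.ofReal (v ^ m) ∂μ ≤
      ENNReal.ofReal ((m / (α * β)) ^ (m / α) * C) := by
  have D_nonneg : 0 ≤ (m / (α * β)) ^ (m / α) := by positivity
  calc ∫⁻ v in Ioi 0, ENNReal.ofReal (v ^ m) ∂μ
      ≤ ∫⁻ v in Ioi 0, ENNReal.ofReal ((m / (α * β)) ^ (m / α)) *
          ENNReal.ofReal (Real.exp (β * v ^ α)) ∂μ :=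
        setLIntegral_mono' measurableSet_Ioi fun v hv => by
          rw [← ENNReal.ofReal_mul D_nonneg]
          exact ENNReal.ofReal_le_ofReal (rpow_le_mul_exp_mul_rpow hα hβ hm (le_of_lt hv))
    _ ≤ ENNReal.ofReal ((m / (α * β)) ^ (m / α) * C) := by
        rw [lintegral_const_mul _ (by fun_prop), ENNReal.ofReal_mul D_nonneg]
        gcongr

end ExponentialMoments

/-! ### Kernels satisfying Assumption A -/

lemma div_add_mem_Icc {v v' : ℝ} (hv : 0 ≤ v) (hv' : 0 ≤ v') : v / (v + v') ∈ Icc (0 : ℝ) 1 :=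
  ⟨by positivity, div_le_one_of_le₀ (by linarith) (by positivity)⟩

namespace KernelAssumptionA

variable {K h : ℝ → ℝ → ℝ} {g : ℝ → ℝ} {γ H H₀ H₁ G₀ G₁ k v v' : ℝ}

lemma le_mul_rpow_add_rpow (hK : KernelAssumptionA K h g γ H H₀ H₁ G₀ G₁ k)
    (hv : 0 < v) (hv' : 0 < v') : K v v' ≤ H₁ * G₁ * (v ^ γ + v' ^ γ) := by
  have ratio_mem := div_add_mem_Icc hv.le hv'.le
  have H₁_pos := hK.H₁_pos
  have g_nonneg : 0 ≤ g (v / (v + v')) :=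
    (mul_nonneg hK.G₀_pos.le (by positivity)).trans (hK.g_lower _ ratio_mem)
  rw [hK.K_eq v v' hv.le hv'.le (by positivity)]
  calc h v v' * g (v / (v + v')) ≤ H₁ * (v ^ γ + v' ^ γ) * G₁ :=
        mul_le_mul (hK.h_upper v v' hv.le hv'.le) (hK.g_upper _ ratio_mem) g_nonneg (by positivity)
    _ = H₁ * G₁ * (v ^ γ + v' ^ γ) := by ring

lemma mul_rpow_le (hK : KernelAssumptionA K h g γ H H₀ H₁ G₀ G₁ k)
    (hv : 0 < v) (hv' : 0 < v') (hvv' : v ≤ 1 / 3 * v') (hH : H ≤ v') :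
    H₀ * (G₀ * (1 / 4) ^ k) * v' ^ γ ≤ K v v' := by
  have H₀_pos := hK.H₀_pos
  have G₀_pos := hK.G₀_pos
  have k_nonneg : 0 ≤ k := zero_le_one.trans hK.k_ge_one
  have ratio_le : v / (v + v') ≤ 1 / 4 := by
    rw [div_le_iff₀ (by positivity)]; linarith
  have le_g : G₀ * (1 / 4) ^ k ≤ g (v / (v + v')) := by
    refine le_trans ?_ (hK.g_lower _ (div_add_mem_Icc hv.le hv'.le))
    gcongr
    exact le_abs.2 (.inr (by linarith))
  have le_h : H₀ * v' ^ γ ≤ h v v' := by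
    refine le_trans ?_ (hK.h_lower v v' hv.le hv'.le (by linarith))
    gcongr
    exact le_add_of_nonneg_left (by positivity)
  rw [hK.K_eq v v' hv.le hv'.le (by positivity)]
  calc H₀ * (G₀ * (1 / 4) ^ k) * v' ^ γ = H₀ * v' ^ γ * (G₀ * (1 / 4) ^ k) := by ring
    _ ≤ h v v' * g (v / (v + v')) :=
        mul_le_mul le_h le_g (by positivity) (le_trans (by positivity) le_h)

lemma continuousOn_uncurry (hK : KernelAssumptionA K h g γ H H₀ H₁ G₀ G₁ k) :
    ContinuousOn (Function.uncurry K) (Ioi 0 ×ˢ Ioi 0) := by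
  have continuousOn_ratio :
      ContinuousOn (fun p : ℝ × ℝ => p.1 / (p.1 + p.2)) (Ioi 0 ×ˢ Ioi 0) :=
    ContinuousOn.div (by fun_prop) (by fun_prop) fun p hp => (add_pos hp.1 hp.2).ne'
  refine ((hK.h_cont.mono (prod_mono Ioi_subset_Ici_self Ioi_subset_Ici_self)).mul
    (hK.g_cont.comp continuousOn_ratio fun p hp =>
      div_add_mem_Icc (le_of_lt hp.1) (le_of_lt hp.2))).congr fun p hp => ?_
  exact hK.K_eq _ _ (le_of_lt hp.1) (le_of_lt hp.2) (add_pos hp.1 hp.2)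

lemma hasOffDiagonalGrowth (hK : KernelAssumptionA K h g γ H H₀ H₁ G₀ G₁ k) :
    HasOffDiagonalGrowth K γ (1 / 3) H (H₀ * (G₀ * (1 / 4) ^ k)) (H₁ * G₁) where
  one_lt_exponent := hK.γ_gt_one
  ratio_pos := by norm_num
  lower_const_pos := mul_pos hK.H₀_pos (mul_pos hK.G₀_pos (by positivity))
  measurable := by
    classical
    rw [← piecewise_eq_indicator]
    exact hK.continuousOn_uncurry.measurable_piecewise continuousOn_const
      (measurableSet_Ioi.prod measurableSet_Ioi)
  nonneg v v' hv hv' := hK.K_nonneg v v' hv.le hv'.le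
  upper _ _ := hK.le_mul_rpow_add_rpow
  lower _ _ := hK.mul_rpow_le

end KernelAssumptionA

theorem moments_bounded_before_gelation_general {K : ℝ → ℝ → ℝ} {γ θ H c B T T' : ℝ}
    {f : ℝ → Measure ℝ} {fin : Measure ℝ} (hK : HasOffDiagonalGrowth K γ θ H c B)
    (hf : IsWeakSolution K γ T' f fin) (hmc : IsMassConserving T' f fin)
    (hv₀ : 0 < ∫ v, v ∂fin) (hT : T < T') :
    ∃ b > 0, ∃ C : ℝ, ∀ t ∈ Icc 0 T,
      ∫⁻ v in Ioi 0, ENNReal.ofReal (Real.exp (b * v ^ (γ - 1))) ∂f t ≤ ENNReal.ofReal C := by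
  obtain ⟨β, β_pos, A, A_nonneg, X, X_nonneg, tail_le⟩ :=
    hf.exists_measureReal_Ici_le_mul_exp hK hmc hv₀ hT
  obtain ⟨N, mass_le⟩ := hf.exists_forall_measureReal_univ_le
  refine ⟨β / 2, half_pos β_pos, Real.exp (β / 2 * X ^ (γ - 1)) * N + A, fun t ht => ?_⟩
  have ht' : t ∈ Icc 0 T' := ⟨ht.1, ht.2.trans hT.le⟩
  have := hf.isFiniteMeasure ht'
  have exp_moment_le := lintegral_exp_mul_rpow_le_of_measureReal_Ici_le
    (sub_pos.2 hK.one_lt_exponent) (half_pos β_pos) A_nonneg X_nonneg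
    (by simpa only [mul_div_cancel₀ β two_ne_zero] using tail_le t ht)
  refine exp_moment_le.trans (ENNReal.ofReal_le_ofReal ?_)
  gcongr
  exact mass_le t ht'

/-- All moments of order `m ≥ 2` of a mass-conserving weak solution
are uniformly bounded on `[0,T]` for every `T` strictly before the final time `T'`. -/
theorem moments_bounded_before_gelation
    (K h : ℝ → ℝ → ℝ) (g : ℝ → ℝ) (γ H H₀ H₁ G₀ G₁ k : ℝ)
    (hK : KernelAssumptionA K h g γ H H₀ H₁ G₀ G₁ k)
    (T' : ℝ) (hT' : 0 < T')
    (fin : Measure ℝ) (hconc : fin (Iic 0) = 0)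
    (hγmom : Integrable (fun v => 1 + v ^ γ) fin)
    (hv₀ : 0 < ∫ v, v ∂fin)
    (f : ℝ → Measure ℝ) (hf : IsWeakSolution K γ T' f fin)
    (hmc : IsMassConserving T' f fin) :
    ∀ m : ℝ, 2 ≤ m → ∀ T ∈ Ioo (0 : ℝ) T', ∃ C : ℝ,
      ∀ t ∈ Icc (0 : ℝ) T,
        (∫⁻ v in Ioi (0 : ℝ), ENNReal.ofReal (v ^ m) ∂(f t)) ≤ ENNReal.ofReal C := by
  intro m hm T hT
  obtain ⟨b, b_pos, C, exp_moment_le⟩ :=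
    moments_bounded_before_gelation_general hK.hasOffDiagonalGrowth hf hmc hv₀ hT.2
  exact ⟨_, fun t ht => setLIntegral_Ioi_rpow_le (sub_pos.2 hK.γ_gt_one) b_pos
    (two_pos.trans_le hm) (exp_moment_le t ht)⟩
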